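/- Every minimum (n,k,t)-graph is a disjoint union of cliques: if G has the fewest edges among all graphs on n vertices in which every k vertices contain a clique on t vertices, then every connected component of G is a complete graph. -/

import Mathlib

open SimpleGraph

/-- `G` is a graph in which every set of `k` vertices contains a clique on `t` vertices. -/
def CliqueInEveryK {V : Type*} [DecidableEq V] (G : SimpleGraph V) (k t : ℕ) : Prop :=
  ∀ s : Finset V, s.card = k → ∃ c ⊆ s, G.IsNClique t c

/-- Every connected component of `G` is a complete graph. -/
def IsDisjointUnionOfCliques {V : Type*} (G : SimpleGraph V) : Prop :=
  ∀ u v : V, G.Reachable u v → u ≠ v → G.Adj u v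

/-- The number of edges of `G`. -/
noncomputable def edgeCount {V : Type*} (G : SimpleGraph V) : ℕ := Nat.card G.edgeSet

/-!
Induct on `t`. Let `G` be a minimum `(n, k, t)`-graph with independence number `α`.

If `α * (t - 1) < k`, then by pigeonhole the complement of every `α`-colourable graph is an
`(n, k, t)`-graph, so `Gᶜ` has as many edges as possible among graphs without a clique on `α + 1`
vertices. By Turán's theorem non-adjacency in `Gᶜ` is transitive, so `G` is a union of cliques.

If `k ≤ α * (t - 1)`, delete a maximum independent set `I`. What remains is an
`(n - α, k - α, t - 1)`-graph; let `H` be a minimum one, a union of cliques by induction. A union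
of cliques of sizes `a c` is a `(k, t)`-graph if and only if `∑ c, min (a c) (t - 1) < k`. Hence
`H` has fewer than `α` cliques on at least `t - 1` vertices, and attaching a vertex of `I` to each
of them turns `H` into an `(n, k, t)`-graph with at most `n - α` new edges. So `G` has at most
`n - α` edges between `I` and its complement. As every vertex outside `I` has a neighbour in `I`,
it has exactly one. This holds for every maximum independent set, and exchanging a vertex of `I`
for a neighbour outside `I` gives another one, which forces adjacency in `G` to be transitive.
-/

open Finset

section EdgeCount

variable {V W : Type*} {G H : SimpleGraph V}

lemma edgeCount_eq_card_edgeFinset (G : SimpleGraph V) [Fintype G.edgeSet] :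
    edgeCount G = #G.edgeFinset := by
  rw [edgeCount, Nat.card_eq_fintype_card, card_edgeSet]

lemma edgeCount_eq_zero_iff [Finite V] : edgeCount G = 0 ↔ G = ⊥ := by
  rw [edgeCount, Nat.card_coe_set_eq, Set.ncard_eq_zero, edgeSet_eq_empty]

lemma edgeCount_sup_of_disjoint [Finite V] (h : Disjoint G H) :
    edgeCount (G ⊔ H) = edgeCount G + edgeCount H := by
  simp only [edgeCount, Nat.card_coe_set_eq, edgeSet_sup]
  exact Set.ncard_union_eq (disjoint_edgeSet.mpr h)

lemma edgeCount_add_edgeCount_compl [Finite V] (G : SimpleGraph V) :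
    edgeCount G + edgeCount Gᶜ = edgeCount (⊤ : SimpleGraph V) := by
  rw [← edgeCount_sup_of_disjoint disjoint_compl_right, sup_compl_eq_top]

lemma edgeCount_map (f : V ↪ W) (G : SimpleGraph V) : edgeCount (G.map f) = edgeCount G := by
  rw [edgeCount, edgeSet_map, Nat.card_image_of_injective f.sym2Map.injective, edgeCount]

lemma degree_between_compl [Fintype V] [DecidableEq V] [DecidableRel G.Adj] {I : Finset V} {w : V}
    (hw : w ∉ I) [Fintype ((G.between (I : Set V) ↑Iᶜ).neighborSet w)] :
    (G.between (I : Set V) ↑Iᶜ).degree w = #{i ∈ I | G.Adj w i} := by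
  rw [← card_neighborFinset_eq_degree]
  congr 1
  ext i
  simp [between_adj, hw, and_comm]

lemma edgeCount_eq_add_sum_of_isIndepSet [Fintype V] [DecidableEq V] [DecidableRel G.Adj]
    {I : Finset V} (hI : G.IsIndepSet (I : Set V)) :
    edgeCount G = edgeCount (G.induce (I : Set V)ᶜ) + ∑ w ∈ Iᶜ, #{i ∈ I | G.Adj w i} := by
  classical
  have hinduce : ∀ u v, (G.induce (I : Set V)ᶜ).spanningCoe.Adj u v ↔
      u ∉ I ∧ v ∉ I ∧ G.Adj u v := by
    simp [and_left_comm]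
  have hdecomp : G = (G.induce (I : Set V)ᶜ).spanningCoe ⊔ G.between (I : Set V) ↑Iᶜ := by
    ext u v
    have huv : u ∈ I → v ∈ I → ¬ G.Adj u v := fun hu hv hadj ↦ hI hu hv hadj.ne hadj
    simp only [sup_adj, hinduce, between_adj, mem_coe, mem_compl]
    tauto
  have hdisj : Disjoint (G.induce (I : Set V)ᶜ).spanningCoe (G.between (I : Set V) ↑Iᶜ) := by
    rw [SimpleGraph.disjoint_left]
    intro u v
    simp only [hinduce, between_adj, mem_coe, mem_compl]
    tauto
  have hbip : (G.between (I : Set V) ↑Iᶜ).IsBipartiteWith I ↑Iᶜ :=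
    between_isBipartiteWith (by simpa using disjoint_compl_right)
  calc edgeCount G
    _ = edgeCount (G.induce (I : Set V)ᶜ) + edgeCount (G.between (I : Set V) ↑Iᶜ) := by
      conv_lhs => rw [hdecomp]
      rw [edgeCount_sup_of_disjoint hdisj, edgeCount_map]
    _ = _ := by
      rw [edgeCount_eq_card_edgeFinset (G.between _ _),
        ← isBipartiteWith_sum_degrees_eq_card_edges' hbip]
      congr 1
      exact sum_congr rfl fun w hw ↦ degree_between_compl (mem_compl.mp hw)

end EdgeCount

section CliqueUnion

variable {V ι κ : Type*}

/-- The disjoint union of the cliques carried by the fibres of a labelling `f` of the vertices. -/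
def cliqueUnion (f : V → ι) : SimpleGraph V where
  Adj u v := u ≠ v ∧ f u = f v
  symm.symm _ _ h := ⟨h.1.symm, h.2.symm⟩
  loopless.irrefl _ h := h.1 rfl

@[simp]
lemma cliqueUnion_adj {f : V → ι} {u v : V} : (cliqueUnion f).Adj u v ↔ u ≠ v ∧ f u = f v :=
  Iff.rfl

lemma cliqueUnion_comp_of_injective {σ : ι → κ} (hσ : σ.Injective) (f : V → ι) :
    cliqueUnion (σ ∘ f) = cliqueUnion f := by
  ext u v
  simp [hσ.eq_iff]

lemma IsDisjointUnionOfCliques.eq_cliqueUnion {G : SimpleGraph V}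
    (h : IsDisjointUnionOfCliques G) : G = cliqueUnion G.connectedComponentMk := by
  ext u v
  rw [cliqueUnion_adj, ConnectedComponent.eq]
  exact ⟨fun hadj ↦ ⟨hadj.ne, hadj.reachable⟩, fun huv ↦ h u v huv.2 huv.1⟩

lemma isDisjointUnionOfCliques_of_adj_trans {G : SimpleGraph V}
    (h : ∀ ⦃u v w⦄, G.Adj u v → G.Adj v w → u ≠ w → G.Adj u w) :
    IsDisjointUnionOfCliques G := by
  rintro u w ⟨p⟩
  induction p with
  | nil => exact fun hne ↦ absurd rfl hne
  | @cons u v w huv _ ih =>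
    intro huw
    obtain rfl | hvw := eq_or_ne v w
    · exact huv
    · exact h huv (ih hvw) huw

variable [Fintype V] [Fintype ι] [DecidableEq ι]

lemma exists_fiber_card_gt_of_sum_min_lt {f : V → ι} {t : ℕ} {X : Finset V}
    (hX : ∑ c, min #{v | f v = c} t < #X) : ∃ c, t < #{v ∈ X | f v = c} := by
  rw [card_eq_sum_card_fiberwise (f := f) (t := univ) (fun _ _ ↦ mem_coe.mpr (mem_univ _))] at hX
  obtain ⟨c, -, hc⟩ := exists_lt_of_sum_lt hX
  have hle : #{v ∈ X | f v = c} ≤ #{v | f v = c} :=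
    card_le_card (filter_subset_filter _ X.subset_univ)
  exact ⟨c, by omega⟩

lemma exists_card_eq_sum_min_fiber (f : V → ι) (t : ℕ) :
    ∃ X : Finset V, #X = ∑ c, min #{v | f v = c} t ∧ ∀ c, #{v ∈ X | f v = c} ≤ t := by
  classical
  choose p hp hpcard using fun c ↦
    exists_subset_card_eq (min_le_left #{v | f v = c} t)
  have hlabel : ∀ c, ∀ v ∈ p c, f v = c := fun c v hv ↦ (mem_filter.mp (hp c hv)).2
  refine ⟨univ.biUnion p, ?_, fun c ↦ ?_⟩
  · rw [card_biUnion, sum_congr rfl fun c _ ↦ hpcard c]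
    intro c _ d _ hcd
    exact disjoint_left.mpr fun v hvc hvd ↦ hcd ((hlabel c v hvc).symm.trans (hlabel d v hvd))
  · have hsub : {v ∈ univ.biUnion p | f v = c} ⊆ p c := by
      intro v hv
      obtain ⟨hvp, rfl⟩ := mem_filter.mp hv
      obtain ⟨d, -, hvd⟩ := mem_biUnion.mp hvp
      rwa [hlabel d v hvd]
    exact (card_le_card hsub).trans ((hpcard c).trans_le (min_le_right _ _))

/-- The sum is the largest size of a set of vertices without a clique on `t + 1` vertices. -/
lemma cliqueInEveryK_cliqueUnion_iff [DecidableEq V] {f : V → ι} {k t : ℕ} :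
    CliqueInEveryK (cliqueUnion f) k (t + 1) ↔ ∑ c, min #{v | f v = c} t < k := by
  constructor
  · intro h
    by_contra! hk
    obtain ⟨X, hXcard, hX⟩ := exists_card_eq_sum_min_fiber f t
    obtain ⟨Y, hYX, hY⟩ := exists_subset_card_eq (hk.trans hXcard.ge)
    obtain ⟨C, hCY, hC⟩ := h Y hY
    obtain ⟨x, hx⟩ : C.Nonempty := card_pos.mp (hC.card_eq ▸ t.succ_pos)
    have hsub : C ⊆ {v ∈ X | f v = f x} := by
      refine fun v hv ↦ mem_filter.mpr ⟨hYX (hCY hv), ?_⟩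
      obtain rfl | hvx := eq_or_ne v x
      · rfl
      · exact (hC.isClique hv hx hvx).2
    have := (card_le_card hsub).trans (hX (f x))
    have := hC.card_eq
    omega
  · rintro hk X rfl
    obtain ⟨c, hc⟩ := exists_fiber_card_gt_of_sum_min_lt hk
    obtain ⟨C, hC, hCcard⟩ := exists_subset_card_eq (Nat.succ_le_of_lt hc)
    refine ⟨C, hC.trans (filter_subset _ _), fun u hu v hv huv ↦ ⟨huv, ?_⟩, hCcard⟩
    rw [(mem_filter.mp (hC hu)).2, (mem_filter.mp (hC hv)).2]

lemma card_large_fibers_mul_lt [DecidableEq V] {f : V → ι} {k t : ℕ}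
    (h : CliqueInEveryK (cliqueUnion f) k (t + 1)) : #{c | t < #{v | f v = c}} * t < k := by
  refine lt_of_le_of_lt ?_ (cliqueInEveryK_cliqueUnion_iff.mp h)
  rw [← smul_eq_mul, ← sum_const]
  refine (sum_le_sum fun c hc ↦ ?_).trans (sum_le_univ_sum_of_nonneg fun _ ↦ Nat.zero_le _)
  exact le_min (mem_filter.mp hc).2.le le_rfl

lemma exists_relabel_of_card_large_fibers_le {α : Type*} [Fintype α] [DecidableEq α]
    {f : V → ι} {t : ℕ} (h : #{c | t < #{v | f v = c}} ≤ Fintype.card α) :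
    ∃ g : V → α ⊕ ι, cliqueUnion g = cliqueUnion f ∧ ∀ c, #{v | g v = .inr c} ≤ t := by
  set large : Finset ι := {c | t < #{v | f v = c}}
  obtain ⟨e⟩ : Nonempty (large ↪ α) := Function.Embedding.nonempty_of_card_le (by simpa using h)
  let σ (c : ι) : α ⊕ ι := if hc : c ∈ large then .inl (e ⟨c, hc⟩) else .inr c
  have hσ : σ.Injective := by
    intro c d hcd
    by_cases hc : c ∈ large <;> by_cases hd : d ∈ large <;>
      simp_all [σ]
  have hσ_inr : ∀ c d, σ c = .inr d → c = d ∧ d ∉ large := by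
    intro c d hcd
    by_cases hc : c ∈ large
    · simp [σ, hc] at hcd
    · obtain rfl : c = d := by simpa [σ, hc] using hcd
      exact ⟨rfl, hc⟩
  refine ⟨σ ∘ f, cliqueUnion_comp_of_injective hσ f, fun d ↦ ?_⟩
  change #{v | σ (f v) = .inr d} ≤ t
  by_cases hd : d ∈ large
  · rw [filter_false_of_mem fun v _ hv ↦ (hσ_inr _ _ hv).2 hd]
    exact Nat.zero_le t
  · have hfiber : #{v | f v = d} ≤ t := by simpa [large] using hd
    exact (card_le_card (monotone_filter_right _ fun v _ hv ↦ (hσ_inr _ _ hv).1)).trans hfiber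

end CliqueUnion

section ExtendLabels

variable {V ι : Type*} [DecidableEq V] {I : Finset V}

/-- Extends a labelling of the vertices outside `I` to all vertices, each vertex of `I` being its
own label. Passing to the extension adds to the clique labelled `.inl i` the one vertex `i`. -/
def extendLabels (f : ((I : Set V)ᶜ : Set V) → I ⊕ ι) (v : V) : I ⊕ ι :=
  if h : v ∈ I then .inl ⟨v, h⟩ else f ⟨v, h⟩

variable (f : ((I : Set V)ᶜ : Set V) → I ⊕ ι)

@[simp]
lemma extendLabels_of_mem {i : V} (hi : i ∈ I) : extendLabels f i = .inl ⟨i, hi⟩ := dif_pos hi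

@[simp]
lemma extendLabels_coe (w : ((I : Set V)ᶜ : Set V)) : extendLabels f w = f w := dif_neg w.2

lemma induce_cliqueUnion_extendLabels :
    (cliqueUnion (extendLabels f)).induce (I : Set V)ᶜ = cliqueUnion f := by
  ext u v
  simp [Subtype.coe_ne_coe]

lemma isIndepSet_cliqueUnion_extendLabels :
    (cliqueUnion (extendLabels f)).IsIndepSet (I : Set V) := by
  rintro i hi j hj hij ⟨-, hlabel⟩
  rw [extendLabels_of_mem f hi, extendLabels_of_mem f hj] at hlabel
  exact hij (congrArg Subtype.val (Sum.inl_injective hlabel))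

variable [Fintype V]

lemma edgeCount_cliqueUnion_extendLabels_le :
    edgeCount (cliqueUnion (extendLabels f)) ≤ edgeCount (cliqueUnion f) + #Iᶜ := by
  classical
  rw [edgeCount_eq_add_sum_of_isIndepSet (isIndepSet_cliqueUnion_extendLabels f),
    induce_cliqueUnion_extendLabels, card_eq_sum_ones]
  gcongr with w
  refine card_le_one.mpr fun i hi j hj ↦ ?_
  obtain ⟨hi, -, hwi⟩ := mem_filter.mp hi
  obtain ⟨hj, -, hwj⟩ := mem_filter.mp hj
  by_contra hij
  exact isIndepSet_cliqueUnion_extendLabels f hi hj hij ⟨hij, hwi.symm.trans hwj⟩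

variable [DecidableEq ι]

lemma card_fiber_extendLabels_inl (i : I) :
    #{v | extendLabels f v = .inl i} = #{w | f w = .inl i} + 1 := by
  have hfiber : ({v | extendLabels f v = .inl i} : Finset V) =
      insert ↑i (({w | f w = .inl i} : Finset _).map (.subtype _)) := by
    ext v
    simp only [mem_filter_univ, mem_insert, mem_map]
    by_cases hv : v ∈ I
    · simp [extendLabels, hv, Subtype.ext_iff]
    · have hvi : v ≠ i := fun h ↦ hv (h ▸ i.2)
      simp [extendLabels, hv, hvi]
  rw [hfiber, card_insert_of_notMem (by simp), card_map]

lemma card_fiber_extendLabels_inr (c : ι) :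
    #{v | extendLabels f v = .inr c} = #{w | f w = .inr c} := by
  have hfiber : ({v | extendLabels f v = .inr c} : Finset V) =
      ({w | f w = .inr c} : Finset _).map (.subtype _) := by
    ext v
    simp only [mem_filter_univ, mem_map]
    by_cases hv : v ∈ I <;> simp [extendLabels, hv]
  rw [hfiber, card_map]

variable {f} in
lemma cliqueInEveryK_cliqueUnion_extendLabels [Finite ι] {k t : ℕ}
    (h : CliqueInEveryK (cliqueUnion f) k (t + 1)) (hf : ∀ c, #{w | f w = .inr c} ≤ t) :
    CliqueInEveryK (cliqueUnion (extendLabels f)) (k + #I) (t + 2) := by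
  cases nonempty_fintype ι
  rw [cliqueInEveryK_cliqueUnion_iff, Fintype.sum_sum_type] at h ⊢
  have hinl : ∑ i : I, min #{v | extendLabels f v = .inl i} (t + 1) =
      ∑ i : I, min #{w | f w = .inl i} t + #I := by
    simp only [card_fiber_extendLabels_inl, min_add_add_right, sum_add_distrib, sum_const,
      card_univ, Fintype.card_coe, smul_eq_mul, mul_one]
  have hinr : ∑ c, min #{v | extendLabels f v = .inr c} (t + 1) =
      ∑ c, min #{w | f w = .inr c} t := by
    refine sum_congr rfl fun c _ ↦ ?_
    rw [card_fiber_extendLabels_inr, min_eq_left (hf c), min_eq_left ((hf c).trans t.le_succ)]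
  omega

end ExtendLabels

section CliqueInEveryK

variable {V : Type*} [DecidableEq V] {G : SimpleGraph V} {k t : ℕ}

lemma CliqueInEveryK.bot (hG : CliqueInEveryK G k t) (ht : t ≤ 1) :
    CliqueInEveryK (⊥ : SimpleGraph V) k t := by
  intro X hX
  obtain ⟨C, hCX, hC⟩ := hG X hX
  have hsub : (C : Set V).Subsingleton := card_le_one_iff_subsingleton.mp (hC.card_eq.trans_le ht)
  exact ⟨C, hCX, hsub.pairwise _, hC.card_eq⟩

lemma CliqueInEveryK.card_lt_of_isIndepSet {I : Finset V} (hG : CliqueInEveryK G k t) (ht : 2 ≤ t)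
    (hI : G.IsIndepSet (I : Set V)) : #I < k := by
  by_contra! hk
  obtain ⟨X, hXI, hX⟩ := exists_subset_card_eq hk
  obtain ⟨C, hCX, hC⟩ := hG X hX
  obtain ⟨u, hu, v, hv, huv⟩ := one_lt_card.mp (ht.trans_eq hC.card_eq.symm)
  exact hI (hXI (hCX hu)) (hXI (hCX hv)) huv (hC.isClique hu hv huv)

lemma card_inter_le_one_of_isClique_of_isIndepSet {C I : Finset V} (hC : G.IsClique (C : Set V))
    (hI : G.IsIndepSet (I : Set V)) : #(C ∩ I) ≤ 1 := by
  refine card_le_one.mpr fun u hu v hv ↦ ?_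
  rw [mem_inter] at hu hv
  by_contra huv
  exact hI hu.2 hv.2 huv (hC hu.1 hv.1 huv)

lemma CliqueInEveryK.induce_compl {I : Finset V} (hI : G.IsIndepSet (I : Set V))
    (hG : CliqueInEveryK G (k + #I) (t + 1)) :
    CliqueInEveryK (G.induce (I : Set V)ᶜ) k t := by
  intro X hX
  set X' : Finset V := X.map (.subtype _)
  have hdisj : Disjoint X' I := disjoint_left.mpr fun v hv hvI ↦ by simp_all [X']
  obtain ⟨C, hCX, hC⟩ := hG (X' ∪ I) (by rw [card_union_of_disjoint hdisj, card_map, hX])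
  have hcard : t ≤ #(C \ I) := by
    have := card_sdiff_add_card_inter C I
    have := card_inter_le_one_of_isClique_of_isIndepSet hC.isClique hI
    have := hC.card_eq
    omega
  obtain ⟨D, hDC, hD⟩ := exists_subset_card_eq hcard
  have hDX : D ⊆ X' := hDC.trans (sdiff_le_iff.mpr (hCX.trans_eq (union_comm _ _)))
  obtain ⟨E, hEX, rfl⟩ := subset_map_iff.mp hDX
  refine ⟨E, hEX, fun u hu v hv huv ↦ ?_, by rwa [card_map] at hD⟩
  have hmem : ∀ w ∈ E, (w : V) ∈ C := fun w hw ↦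
    (mem_sdiff.mp (hDC (mem_map_of_mem _ hw))).1
  exact hC.isClique (hmem u hu) (hmem v hv) (Subtype.coe_ne_coe.mpr huv)

lemma cliqueInEveryK_compl_of_colorable {a : ℕ} (hG : G.Colorable a) (hk : a * t < k) :
    CliqueInEveryK Gᶜ k (t + 1) := by
  rintro X rfl
  obtain ⟨color⟩ := hG
  obtain ⟨c, -, hc⟩ := exists_lt_card_fiber_of_mul_lt_card_of_maps_to
    (f := color) (t := univ) (fun _ _ ↦ mem_univ _) (by simpa using hk)
  obtain ⟨C, hCX, hC⟩ := exists_subset_card_eq (Nat.succ_le_of_lt hc)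
  refine ⟨C, hCX.trans (filter_subset _ _), ?_, hC⟩
  rw [isClique_compl]
  intro u hu v hv _ huv
  exact color.valid huv ((mem_filter.mp (hCX hu)).2.trans (mem_filter.mp (hCX hv)).2.symm)

lemma IsDisjointUnionOfCliques.exists_extend_compl [Fintype V] {I : Finset V}
    {H : SimpleGraph ((I : Set V)ᶜ : Set V)} (hH : IsDisjointUnionOfCliques H)
    (hHk : CliqueInEveryK H k (t + 1)) (hk : k ≤ #I * t) :
    ∃ K : SimpleGraph V, CliqueInEveryK K (k + #I) (t + 2) ∧
      edgeCount K ≤ edgeCount H + #Iᶜ := by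
  classical
  have hHunion := hH.eq_cliqueUnion
  have hlarge : #{c | t < #{w | H.connectedComponentMk w = c}} < #I :=
    Nat.lt_of_mul_lt_mul_right ((card_large_fibers_mul_lt (hHunion ▸ hHk)).trans_le hk)
  obtain ⟨f, hf, hfsmall⟩ := exists_relabel_of_card_large_fibers_le (α := I)
    (hlarge.le.trans (Fintype.card_coe I).ge)
  have hHf : H = cliqueUnion f := hHunion.trans hf.symm
  exact ⟨cliqueUnion (extendLabels f),
    cliqueInEveryK_cliqueUnion_extendLabels (hHf ▸ hHk) hfsmall,
    (edgeCount_cliqueUnion_extendLabels_le f).trans_eq (congrArg (edgeCount · + #Iᶜ) hHf.symm)⟩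

end CliqueInEveryK

section MaximumIndepSet

variable {V : Type*} [Finite V] {G : SimpleGraph V} {I : Finset V}

lemma exists_adj_of_isMaximumIndepSet (hI : G.IsMaximumIndepSet I) {w : V} (hw : w ∉ I) :
    ∃ i ∈ I, G.Adj w i := by
  classical
  by_contra! hnadj
  have hins : G.IsIndepSet (insert w I : Finset V) := by
    rw [coe_insert]
    refine hI.isIndepSet.insert fun i hi _ ↦ ⟨hnadj i hi, fun h ↦ hnadj i hi h.symm⟩
  have := hI.maximum _ hins
  rw [card_insert_of_notMem hw] at this
  omega

lemma isMaximumIndepSet_insert_erase [DecidableEq V] (hI : G.IsMaximumIndepSet I) {w i : V}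
    (hw : w ∉ I) (hi : i ∈ I) (hwi : ∀ j ∈ I, G.Adj w j → j = i) :
    G.IsMaximumIndepSet (insert w (I.erase i)) := by
  refine ⟨?_, fun J hJ ↦ (hI.maximum J hJ).trans_eq ?_⟩
  · rw [coe_insert]
    refine (hI.isIndepSet.mono (coe_subset.mpr (erase_subset i I))).insert fun j hj _ ↦ ?_
    have hnadj : ¬ G.Adj w j := fun h ↦ (mem_erase.mp hj).1 (hwi j (mem_erase.mp hj).2 h)
    exact ⟨hnadj, fun h ↦ hnadj h.symm⟩
  · rw [card_insert_of_notMem (fun h ↦ hw (mem_erase.mp h).2), card_erase_add_one hi]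

lemma isDisjointUnionOfCliques_of_existsUnique_adj
    (h : ∀ I, G.IsMaximumIndepSet I → ∀ w ∉ I, ∃! i, i ∈ I ∧ G.Adj w i) :
    IsDisjointUnionOfCliques G := by
  classical
  have hswap : ∀ {I w i}, G.IsMaximumIndepSet I → w ∉ I → i ∈ I → G.Adj w i →
      G.IsMaximumIndepSet (insert w (I.erase i)) := fun hI hw hi hwi ↦
    isMaximumIndepSet_insert_erase hI hw hi fun _ hj hwj ↦
      (h _ hI _ hw).unique ⟨hj, hwj⟩ ⟨hi, hwi⟩
  have hcover : ∀ v, ∃ I, G.IsMaximumIndepSet I ∧ v ∈ I := by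
    intro v
    obtain ⟨I, hI⟩ := G.maximumIndepSet_exists
    by_cases hv : v ∈ I
    · exact ⟨I, hI, hv⟩
    · obtain ⟨i, hi, hvi⟩ := exists_adj_of_isMaximumIndepSet hI hv
      exact ⟨_, hswap hI hv hi hvi, mem_insert_self _ _⟩
  refine isDisjointUnionOfCliques_of_adj_trans fun u v w huv hvw huw ↦ ?_
  obtain ⟨I, hI, hv⟩ := hcover v
  have hu : u ∉ I := fun hu ↦ hI.isIndepSet hu hv huv.ne huv
  have hw : w ∉ I := fun hw ↦ hI.isIndepSet hv hw hvw.ne hvw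
  obtain ⟨j, hj, hwj⟩ := exists_adj_of_isMaximumIndepSet (hswap hI hu hv huv) (w := w)
    (by simp [huw.symm, hw])
  obtain rfl | hj := mem_insert.mp hj
  · exact hwj.symm
  · have hjv : j = v := (h I hI w hw).unique ⟨(mem_erase.mp hj).2, hwj⟩ ⟨hv, hvw.symm⟩
    exact absurd hjv (mem_erase.mp hj).1

end MaximumIndepSet

section IndepNum

variable {V : Type*} [Finite V] {G : SimpleGraph V}

lemma cliqueFree_compl_of_indepNum_lt {n : ℕ} (h : G.indepNum < n) : Gᶜ.CliqueFree n := by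
  rw [cliqueFree_compl]
  intro I hI
  exact h.not_ge (hI.card_eq ▸ hI.isIndepSet.card_le_indepNum)

lemma indepNum_pos [Nonempty V] : 0 < G.indepNum := by
  obtain ⟨v⟩ := ‹Nonempty V›
  have hv : G.IsIndepSet (({v} : Finset V) : Set V) := by simp
  exact card_pos.mpr (singleton_nonempty v) |>.trans_le hv.card_le_indepNum

end IndepNum

section Turan

variable {V : Type*} [Fintype V] {G : SimpleGraph V} {a : ℕ}

lemma colorable_of_isTuranMaximal [DecidableRel G.Adj] (hG : G.IsTuranMaximal a) : G.Colorable a :=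
  IsCompleteMultipartite.colorable_of_cliqueFree ⟨fun _ _ _ ↦ hG.not_adj_trans⟩ hG.1

lemma isDisjointUnionOfCliques_of_isTuranMaximal_compl [DecidableRel Gᶜ.Adj]
    (hG : Gᶜ.IsTuranMaximal a) : IsDisjointUnionOfCliques G := by
  refine isDisjointUnionOfCliques_of_adj_trans fun u v w huv hvw huw ↦ ?_
  have hnadj : ¬ Gᶜ.Adj u w :=
    hG.not_adj_trans (s := v) (fun h ↦ h.2 huv) (fun h ↦ h.2 hvw)
  simpa [huw] using hnadj

end Turan

section Minimum

variable {V : Type*} [DecidableEq V] {G : SimpleGraph V} {k t : ℕ}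

/-- `G` is a minimum `(n, k, t)`-graph, where `n` is the number of its vertices. -/
structure IsMinimumCliqueInEveryK (G : SimpleGraph V) (k t : ℕ) : Prop where
  cliqueInEveryK : CliqueInEveryK G k t
  edgeCount_le : ∀ H : SimpleGraph V, CliqueInEveryK H k t → edgeCount G ≤ edgeCount H

lemma exists_isMinimumCliqueInEveryK (hG : CliqueInEveryK G k t) :
    ∃ H : SimpleGraph V, IsMinimumCliqueInEveryK H k t := by
  obtain ⟨H, hH, hmin⟩ :=
    exists_minimalFor_of_wellFoundedLT (fun H : SimpleGraph V ↦ CliqueInEveryK H k t) edgeCount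
      ⟨G, hG⟩
  exact ⟨H, hH, fun K hK ↦ (le_total _ _).elim id (hmin hK)⟩

namespace IsMinimumCliqueInEveryK

lemma eq_bot [Finite V] (hG : IsMinimumCliqueInEveryK G k t) (ht : t ≤ 1) : G = ⊥ :=
  edgeCount_eq_zero_iff.mp <| Nat.le_zero.mp <|
    (hG.edgeCount_le ⊥ (hG.cliqueInEveryK.bot ht)).trans_eq (edgeCount_eq_zero_iff.mpr rfl)

lemma isDisjointUnionOfCliques_of_le_one [Finite V] (hG : IsMinimumCliqueInEveryK G k t)
    (ht : t ≤ 1) : IsDisjointUnionOfCliques G := by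
  rw [hG.eq_bot ht]
  exact fun u v huv hne ↦ absurd (reachable_bot.mp huv) hne

lemma isTuranMaximal_compl [Fintype V] [Nonempty V] [DecidableRel Gᶜ.Adj]
    (hG : IsMinimumCliqueInEveryK G k (t + 1)) (hk : G.indepNum * t < k) :
    Gᶜ.IsTuranMaximal G.indepNum := by
  obtain ⟨T, _, hT⟩ := exists_isTuranMaximal (V := V) (indepNum_pos (G := G))
  refine ⟨cliqueFree_compl_of_indepNum_lt (Nat.lt_succ_self _), fun H _ hH ↦ (hT.2 hH).trans ?_⟩
  have hle := hG.edgeCount_le Tᶜ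
    (cliqueInEveryK_compl_of_colorable (colorable_of_isTuranMaximal hT) hk)
  have hGsum := edgeCount_add_edgeCount_compl G
  have hTsum := edgeCount_add_edgeCount_compl T
  rw [← edgeCount_eq_card_edgeFinset, ← edgeCount_eq_card_edgeFinset]
  omega

lemma sum_card_adj_le [Fintype V] [DecidableRel G.Adj] {I : Finset V}
    {H : SimpleGraph ((I : Set V)ᶜ : Set V)} (hG : IsMinimumCliqueInEveryK G (k + #I) (t + 2))
    (hI : G.IsIndepSet (I : Set V)) (hk : k ≤ #I * t) (hH : IsMinimumCliqueInEveryK H k (t + 1))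
    (hHcliques : IsDisjointUnionOfCliques H) : ∑ w ∈ Iᶜ, #{i ∈ I | G.Adj w i} ≤ #Iᶜ := by
  obtain ⟨K, hK, hKcount⟩ := hHcliques.exists_extend_compl hH.cliqueInEveryK hk
  have hGK := hG.edgeCount_le K hK
  have hHG := hH.edgeCount_le _ (hG.cliqueInEveryK.induce_compl hI)
  have hGsplit := edgeCount_eq_add_sum_of_isIndepSet hI
  omega

lemma existsUnique_adj [Finite V] {I : Finset V} {H : SimpleGraph ((I : Set V)ᶜ : Set V)}
    (hG : IsMinimumCliqueInEveryK G (k + #I) (t + 2)) (hI : G.IsMaximumIndepSet I)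
    (hk : k ≤ #I * t) (hH : IsMinimumCliqueInEveryK H k (t + 1))
    (hHcliques : IsDisjointUnionOfCliques H) {w : V} (hw : w ∉ I) :
    ∃! i, i ∈ I ∧ G.Adj w i := by
  classical
  cases nonempty_fintype V
  have hpos : ∀ v ∈ Iᶜ, 1 ≤ #{i ∈ I | G.Adj v i} := fun v hv ↦ by
    obtain ⟨i, hi⟩ := exists_adj_of_isMaximumIndepSet hI (mem_compl.mp hv)
    exact card_pos.mpr ⟨i, mem_filter.mpr hi⟩
  have hsum : ∑ v ∈ Iᶜ, 1 = ∑ v ∈ Iᶜ, #{i ∈ I | G.Adj v i} :=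
    (sum_le_sum hpos).antisymm
      ((hG.sum_card_adj_le hI.isIndepSet hk hH hHcliques).trans_eq (card_eq_sum_ones _))
  have hone := (sum_eq_sum_iff_of_le hpos).mp hsum w (mem_compl.mpr hw)
  simpa only [card_eq_one, singleton_iff_unique_mem, mem_filter] using hone.symm

lemma isDisjointUnionOfCliques_of_le_indepNum_mul [Finite V]
    (hG : IsMinimumCliqueInEveryK G k (t + 2)) (hk : k ≤ G.indepNum * (t + 1))
    (ih : ∀ (I : Finset V) (j : ℕ) (H : SimpleGraph ((I : Set V)ᶜ : Set V)),
      IsMinimumCliqueInEveryK H j (t + 1) → IsDisjointUnionOfCliques H) :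
    IsDisjointUnionOfCliques G := by
  cases nonempty_fintype V
  refine isDisjointUnionOfCliques_of_existsUnique_adj fun I hI w hw ↦ ?_
  have hIk : #I < k := hG.cliqueInEveryK.card_lt_of_isIndepSet (by omega) hI.isIndepSet
  obtain ⟨j, rfl⟩ := Nat.exists_eq_add_of_le' hIk.le
  rw [← maximumIndepSet_card_eq_indepNum I hI, mul_add_one] at hk
  obtain ⟨H, hH⟩ := exists_isMinimumCliqueInEveryK (hG.cliqueInEveryK.induce_compl hI.isIndepSet)
  exact hG.existsUnique_adj hI (by omega) hH (ih I j H hH) hw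

lemma isDisjointUnionOfCliques_of_indepNum_mul_lt [Finite V]
    (hG : IsMinimumCliqueInEveryK G k (t + 1)) (hk : G.indepNum * t < k) :
    IsDisjointUnionOfCliques G := by
  classical
  cases nonempty_fintype V
  cases isEmpty_or_nonempty V
  · exact fun v ↦ isEmptyElim v
  · exact isDisjointUnionOfCliques_of_isTuranMaximal_compl (hG.isTuranMaximal_compl hk)

end IsMinimumCliqueInEveryK

end Minimum

theorem stmt_14_general {V : Type*} [Finite V] [DecidableEq V] {G : SimpleGraph V} {k t : ℕ}
    (hG : IsMinimumCliqueInEveryK G k t) : IsDisjointUnionOfCliques G := by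
  induction t generalizing V k with
  | zero => exact hG.isDisjointUnionOfCliques_of_le_one zero_le_one
  | succ t ih =>
    obtain _ | t := t
    · exact hG.isDisjointUnionOfCliques_of_le_one le_rfl
    obtain hk | hk := le_or_gt k (G.indepNum * (t + 1))
    · exact hG.isDisjointUnionOfCliques_of_le_indepNum_mul hk fun _ _ _ ↦ ih
    · exact hG.isDisjointUnionOfCliques_of_indepNum_mul_lt hk

/-- Every minimum `(n,k,t)`-graph is a disjoint union of cliques. -/
theorem stmt_14 {n k t : ℕ} (ht : 1 ≤ t) (htk : t ≤ k) (hkn : k ≤ n)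
    (G : SimpleGraph (Fin n)) (hG : CliqueInEveryK G k t)
    (hmin : ∀ H : SimpleGraph (Fin n), CliqueInEveryK H k t →
      edgeCount G ≤ edgeCount H) :
    IsDisjointUnionOfCliques G :=
  stmt_14_general ⟨hG, hmin⟩
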